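/- Under the discrete inf-sup condition with constant β > 0, the output error satisfies |s^𝒩 − s_N| = |l(u^𝒩 − u_N)| ≤ β^{-1} ‖l‖_{(X^𝒩)'} ‖r^pr‖_{(X^𝒩)'}, where s^𝒩 = l(u^𝒩) and s_N = l(u_N). -/

import Mathlib

/-- The dual norm of a functional `r` taken over a subspace `S`:
the supremum over `v ∈ S`, `v ≠ 0`, of `‖r v‖ / ‖v‖`. -/
noncomputable def dualNormOn {X : Type*} [NormedAddCommGroup X] [NormedSpace ℂ X]
    (S : Submodule ℂ X) (r : X → ℂ) : ℝ :=
  sSup {c : ℝ | ∃ v ∈ S, v ≠ 0 ∧ c = ‖r v‖ / ‖v‖}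

section DualNorm

variable {X : Type*} [NormedAddCommGroup X] [NormedSpace ℂ X] {S : Submodule ℂ X}

theorem dualNormOn_nonneg (S : Submodule ℂ X) (r : X → ℂ) : 0 ≤ dualNormOn S r := by
  apply Real.sSup_nonneg
  rintro _ ⟨v, -, -, rfl⟩
  positivity

theorem dualNormOn_congr {r₁ r₂ : X → ℂ} (h : Set.EqOn r₁ r₂ S) :
    dualNormOn S r₁ = dualNormOn S r₂ :=
  congrArg sSup <| Set.ext fun _ => exists_congr fun _ => and_congr_right fun hv => by rw [h hv]

theorem norm_le_dualNormOn_mul_norm {r : X → ℂ} {C : ℝ} (hr : ∀ v ∈ S, ‖r v‖ ≤ C * ‖v‖)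
    {v : X} (hv : v ∈ S) : ‖r v‖ ≤ dualNormOn S r * ‖v‖ := by
  rcases eq_or_ne v 0 with rfl | hv0
  · simpa only [norm_zero, mul_zero] using hr 0 hv
  · rw [← div_le_iff₀ (norm_pos_iff.mpr hv0)]
    refine le_csSup ⟨C, ?_⟩ ⟨v, hv, hv0, rfl⟩
    rintro _ ⟨w, hw, hw0, rfl⟩
    exact (div_le_iff₀ (norm_pos_iff.mpr hw0)).mpr (hr w hw)

end DualNorm

section InfSup

variable {X : Type*} [NormedAddCommGroup X] [NormedSpace ℂ X] {S : Submodule ℂ X}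
  {σ τ : ℂ →+* ℂ} {a : X →ₛₗ[σ] X →ₛₗ[τ] ℂ} {f : X → ℂ} {u w : X} {β : ℝ}

theorem dualNormOn_error_eq_dualNormOn_residual (h_truth : ∀ v ∈ S, a u v = f v) (w : X) :
    dualNormOn S (fun v => a (u - w) v) = dualNormOn S (fun v => f v - a w v) :=
  dualNormOn_congr fun v hv => by
    simp only [map_sub, LinearMap.sub_apply, h_truth v hv]

theorem norm_error_le_inv_mul_dualNormOn_residual (hu : u ∈ S) (hw : w ∈ S)
    (h_truth : ∀ v ∈ S, a u v = f v) (hβ : 0 < β)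
    (h_infsup : ∀ x ∈ S, β * ‖x‖ ≤ dualNormOn S (fun v => a x v)) :
    ‖u - w‖ ≤ β⁻¹ * dualNormOn S (fun v => f v - a w v) := by
  rw [le_inv_mul_iff₀ hβ, ← dualNormOn_error_eq_dualNormOn_residual h_truth w]
  exact h_infsup (u - w) (S.sub_mem hu hw)

theorem output_error_bound_inf_sup_general (l : X →L[ℂ] ℂ) (hu : u ∈ S) (hw : w ∈ S)
    (h_truth : ∀ v ∈ S, a u v = f v) (hβ : 0 < β)
    (h_infsup : ∀ x ∈ S, β * ‖x‖ ≤ dualNormOn S (fun v => a x v)) :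
    ‖l (u - w)‖ ≤
      β⁻¹ * dualNormOn S (fun v => l v) * dualNormOn S (fun v => f v - a w v) :=
  calc ‖l (u - w)‖
      ≤ dualNormOn S (fun v => l v) * ‖u - w‖ :=
        norm_le_dualNormOn_mul_norm (fun v _ => l.le_opNorm v) (S.sub_mem hu hw)
    _ ≤ dualNormOn S (fun v => l v) * (β⁻¹ * dualNormOn S (fun v => f v - a w v)) := by
        gcongr
        · exact dualNormOn_nonneg S _
        · exact norm_error_le_inv_mul_dualNormOn_residual hu hw h_truth hβ h_infsup
    _ = β⁻¹ * dualNormOn S (fun v => l v) * dualNormOn S (fun v => f v - a w v) := by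
        ring

end InfSup

/-- Under the discrete inf-sup condition with constant `β > 0`,
the output error satisfies
`|s^𝒩 − s_N| = |l(u^𝒩 − u_N)| ≤ β⁻¹ ‖l‖_{(X^𝒩)'} ‖r^pr‖_{(X^𝒩)'}`,
where `s^𝒩 = l(u^𝒩)` and `s_N = l(u_N)`. -/
theorem output_error_bound_inf_sup
    {X : Type*} [NormedAddCommGroup X] [NormedSpace ℂ X]
    (a : X →L[ℂ] X →L[ℂ] ℂ) (f l : X →L[ℂ] ℂ)
    (XN XNN : Submodule ℂ X) (h_sub : XN ≤ XNN)
    (uT : X) (huT : uT ∈ XNN) (h_truth : ∀ v ∈ XNN, a uT v = f v)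
    (uR : X) (huR : uR ∈ XN) (h_reduced : ∀ v ∈ XN, a uR v = f v)
    (β : ℝ) (hβ : 0 < β)
    (h_infsup : ∀ u ∈ XNN, β * ‖u‖ ≤ dualNormOn XNN (fun v => a u v)) :
    ‖l uT - l uR‖ = ‖l (uT - uR)‖ ∧
    ‖l (uT - uR)‖ ≤
      β⁻¹ * dualNormOn XNN (fun v => l v) * dualNormOn XNN (fun v => f v - a uR v) :=
  ⟨by rw [map_sub], output_error_bound_inf_sup_general (a := a.toLinearMap₁₂) l
    huT (h_sub huR) h_truth hβ h_infsup⟩
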